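/- arXiv:math/0701399 — 4 statements merged into one kernel-verified Lean document; each statement's English description precedes it below -/
import Mathlib

section
/- Let Γ be an abelian group, F and A associative algebras over a field k of characteristic 0 with A unital, and let (E_α)_{α∈Γ} and (B_α)_{α∈Γ} be families of k-subspaces of F and of A, respectively, and v ∈ Γ a fixed element, such that for all α, β ∈ Γ: E_α·E_β ⊆ E_{α+β}, [E_α, E_β] ⊆ E_{α+β+v}, B_β·B_α ⊆ B_{α+β}, and [B_β, B_α] ⊆ B_{α+β−v}. Then for any α₀ ∈ Γ the subspace h = E_{α₀} ⊗ B_{α₀+v} + Σ_{α,β∈Γ} ( [E_α, E_β] ⊗ B_{β+v}·B_{α+v} + E_α·E_β ⊗ [B_{β+v}, B_{α+v}] ) is a Lie subalgebra of F ⊗ A under the commutator bracket. -/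
open Submodule TensorProduct

variable (K : Type*) [Field K]

/-- The span of all products `a * b`, `a ∈ S`, `b ∈ T` (the subspace `S·T`). -/
def pSpan {R : Type*} [NonUnitalRing R] [Module K R] (S T : Submodule K R) : Submodule K R :=
  Submodule.span K {x | ∃ a ∈ S, ∃ b ∈ T, x = a * b}

/-- The span of all commutators `a * b - b * a`, `a ∈ S`, `b ∈ T` (the subspace `[S, T]`). -/
def bSpan {R : Type*} [NonUnitalRing R] [Module K R] (S T : Submodule K R) : Submodule K R :=
  Submodule.span K {x | ∃ a ∈ S, ∃ b ∈ T, x = a * b - b * a}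

/-- The `k`-th commutator space `S^(k)`: `S^(0) = S`, `S^(k) = [S, S^(k-1)]`.
For `S = ⊤` this is the commutator space `F^(k)` of the algebra. -/
def cSp {R : Type*} [NonUnitalRing R] [Module K R] (S : Submodule K R) : ℕ → Submodule K R
  | 0 => S
  | (k+1) => bSpan K S (cSp S k)

/-- `IklS K S ℓ k` is `I_k^ℓ(R, S)`: the sum of `S^(λ₁) ⋯ S^(λ_ℓ)` over
`λ₁ + ⋯ + λ_ℓ = k`, defined via the recursion `I_k^1 = S^(k)`,
`I_k^ℓ = Σ_{0 ≤ i ≤ k} S^(i) · I_{k-i}^{ℓ-1}`.  The first argument is the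
superscript `ℓ`, the second the subscript `k`; the (unused) value at `ℓ = 0` is `⊥`.
For `S = ⊤` this is `I_k^ℓ(F)`. -/
def IklS {R : Type*} [NonUnitalRing R] [Module K R] (S : Submodule K R) :
    ℕ → ℕ → Submodule K R
  | 0, _ => ⊥
  | 1, k => cSp K S k
  | (ℓ+2), k => ∑ i ∈ Finset.range (k+1), pSpan K (cSp K S i) (IklS S (ℓ+1) (k-i))

/-- `I_k^{≤ℓ}(F) = Σ_{1 ≤ ℓ' ≤ ℓ} I_k^{ℓ'}(F)`. -/
def Ikle {R : Type*} [NonUnitalRing R] [Module K R] (ℓ k : ℕ) : Submodule K R :=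
  ∑ ℓ' ∈ Finset.Icc 1 ℓ, IklS K (⊤ : Submodule K R) ℓ' k

/-- `I_k(F) = Σ_{ℓ ≥ 1} I_k^ℓ(F)`. -/
def Ik (R : Type*) [NonUnitalRing R] [Module K R] (k : ℕ) : Submodule K R :=
  ⨆ ℓ : ℕ, IklS K (⊤ : Submodule K R) (ℓ + 1) k

/-- `g^n`: the span of all products of `n` elements of `g` (set to `⊥` for `n = 0`). -/
def gPow {R : Type*} [NonUnitalRing R] [Module K R] (g : Submodule K R) : ℕ → Submodule K R
  | 0 => ⊥
  | 1 => g
  | (n+2) => pSpan K g (gPow g (n+1))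

/-- The Lie subalgebra (under the commutator bracket) generated by a subspace `S`:
the smallest subspace containing `S` and closed under `(x, y) ↦ x * y - y * x`. -/
def lieGen {R : Type*} [NonUnitalRing R] [Module K R] (S : Submodule K R) : Submodule K R :=
  sInf {T | S ≤ T ∧ ∀ x ∈ T, ∀ y ∈ T, x * y - y * x ∈ T}

/-- The subspace `S ⊗ T` of `F ⊗[K] A`: the span of all pure tensors `f ⊗ a`
with `f ∈ S`, `a ∈ T`. -/
def tSpan {F A : Type*} [AddCommGroup F] [Module K F] [AddCommGroup A] [Module K A]
    (S : Submodule K F) (T : Submodule K A) : Submodule K (F ⊗[K] A) :=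
  Submodule.span K {z | ∃ f ∈ S, ∃ a ∈ T, z = f ⊗ₜ[K] a}

/-- The current Lie algebra `(g, A)(F)`: the Lie subalgebra of `F ⊗ A` (with the
commutator bracket) generated by `F ⊗ g`. -/
def currentLie {F A : Type*} [NonUnitalRing F] [Module K F] [SMulCommClass K F F]
    [IsScalarTower K F F] [Ring A] [Algebra K A] (g : Submodule K A) :
    Submodule K (F ⊗[K] A) :=
  lieGen K (tSpan K (⊤ : Submodule K F) g)

/-- the `Γ`-graded construction. Given families of subspaces
`E_α ⊆ F`, `B_α ⊆ A` with `E_α·E_β ⊆ E_{α+β}`, `[E_α, E_β] ⊆ E_{α+β+v}`,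
`B_β·B_α ⊆ B_{α+β}`, `[B_β, B_α] ⊆ B_{α+β−v}`, the subspace
`h = E_{α₀} ⊗ B_{α₀+v} + Σ_{α,β} ([E_α, E_β] ⊗ B_{β+v}·B_{α+v}
+ E_α·E_β ⊗ [B_{β+v}, B_{α+v}])` is a Lie subalgebra of `F ⊗ A`. -/
theorem statement12 {K : Type*} [Field K] [CharZero K]
    {F : Type*} [NonUnitalRing F] [Module K F] [SMulCommClass K F F] [IsScalarTower K F F]
    {A : Type*} [Ring A] [Algebra K A]
    {Γ : Type*} [AddCommGroup Γ] (v : Γ)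
    (E : Γ → Submodule K F) (B : Γ → Submodule K A)
    (hEmul : ∀ α β : Γ, pSpan K (E α) (E β) ≤ E (α + β))
    (hEbrk : ∀ α β : Γ, bSpan K (E α) (E β) ≤ E (α + β + v))
    (hBmul : ∀ α β : Γ, pSpan K (B β) (B α) ≤ B (α + β))
    (hBbrk : ∀ α β : Γ, bSpan K (B β) (B α) ≤ B (α + β - v))
    (α₀ : Γ) :
    ∀ x ∈ tSpan K (E α₀) (B (α₀ + v)) ⊔
        ⨆ α : Γ, ⨆ β : Γ,
          (tSpan K (bSpan K (E α) (E β)) (pSpan K (B (β + v)) (B (α + v))) ⊔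
            tSpan K (pSpan K (E α) (E β)) (bSpan K (B (β + v)) (B (α + v)))),
      ∀ y ∈ tSpan K (E α₀) (B (α₀ + v)) ⊔
          ⨆ α : Γ, ⨆ β : Γ,
            (tSpan K (bSpan K (E α) (E β)) (pSpan K (B (β + v)) (B (α + v))) ⊔
              tSpan K (pSpan K (E α) (E β)) (bSpan K (B (β + v)) (B (α + v)))),
        x * y - y * x ∈ tSpan K (E α₀) (B (α₀ + v)) ⊔
          ⨆ α : Γ, ⨆ β : Γ,
            (tSpan K (bSpan K (E α) (E β)) (pSpan K (B (β + v)) (B (α + v))) ⊔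
              tSpan K (pSpan K (E α) (E β)) (bSpan K (B (β + v)) (B (α + v)))) := by
  set H := tSpan K (E α₀) (B (α₀ + v)) ⊔
        ⨆ α : Γ, ⨆ β : Γ,
          (tSpan K (bSpan K (E α) (E β)) (pSpan K (B (β + v)) (B (α + v))) ⊔
            tSpan K (pSpan K (E α) (E β)) (bSpan K (B (β + v)) (B (α + v)))) with hH
  set T : Submodule K (F ⊗[K] A) :=
    Submodule.span K {z | ∃ γ, ∃ f ∈ E γ, ∃ a ∈ B (γ + v), z = f ⊗ₜ[K] a} with hT
  have hHT : H ≤ T := by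
    refine sup_le ?_ (iSup_le fun α => iSup_le fun β => sup_le ?_ ?_)
    · refine Submodule.span_le.2 ?_
      rintro z ⟨f, hf, a, ha, rfl⟩
      exact Submodule.subset_span ⟨_, f, hf, a, ha, rfl⟩
    · refine Submodule.span_le.2 ?_
      rintro z ⟨f, hf, a, ha, rfl⟩
      refine Submodule.subset_span ⟨α + β + v, f, hEbrk _ _ hf, a, ?_, rfl⟩
      have := hBmul _ _ ha
      rwa [show α + v + (β + v) = α + β + v + v by abel] at this
    · refine Submodule.span_le.2 ?_
      rintro z ⟨f, hf, a, ha, rfl⟩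
      refine Submodule.subset_span ⟨α + β, f, hEmul _ _ hf, a, ?_, rfl⟩
      have := hBbrk _ _ ha
      rwa [show α + v + (β + v) - v = α + β + v by abel] at this
  have key : ∀ x ∈ T, ∀ y ∈ T, x * y - y * x ∈ H := by
    intro x hx y hy
    induction hx using Submodule.span_induction with
    | zero => simp
    | add p q _ _ hp hq =>
      have : (p + q) * y - y * (p + q) = (p * y - y * p) + (q * y - y * q) := by
        rw [add_mul, mul_add]; abel
      rw [this]; exact H.add_mem hp hq
    | smul c p _ hp =>
      rw [smul_mul_assoc, mul_smul_comm, ← smul_sub]; exact H.smul_mem c hp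
    | mem p hp =>
      obtain ⟨α, e, he, b, hb, rfl⟩ := hp
      induction hy using Submodule.span_induction with
      | zero => simp
      | add p q _ _ hp hq =>
        have : (e ⊗ₜ[K] b) * (p + q) - (p + q) * (e ⊗ₜ[K] b) =
            ((e ⊗ₜ[K] b) * p - p * (e ⊗ₜ[K] b)) + ((e ⊗ₜ[K] b) * q - q * (e ⊗ₜ[K] b)) := by
          rw [add_mul, mul_add]; abel
        rw [this]; exact H.add_mem hp hq
      | smul c p _ hp =>
        rw [smul_mul_assoc, mul_smul_comm, ← smul_sub]; exact H.smul_mem c hp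
      | mem q hq =>
        obtain ⟨β, e', he', b', hb', rfl⟩ := hq
        have : (e ⊗ₜ[K] b) * (e' ⊗ₜ[K] b') - (e' ⊗ₜ[K] b') * (e ⊗ₜ[K] b) =
            (e * e' - e' * e) ⊗ₜ[K] (b' * b) - (e * e') ⊗ₜ[K] (b' * b - b * b') := by
          rw [Algebra.TensorProduct.tmul_mul_tmul, Algebra.TensorProduct.tmul_mul_tmul,
            TensorProduct.sub_tmul, TensorProduct.tmul_sub]
          abel
        rw [this]
        have hle := le_sup_of_le_right (a := tSpan K (E α₀) (B (α₀ + v)))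
          (le_iSup_of_le α (le_iSup (fun β => 
          (tSpan K (bSpan K (E α) (E β)) (pSpan K (B (β + v)) (B (α + v))) ⊔
            tSpan K (pSpan K (E α) (E β)) (bSpan K (B (β + v)) (B (α + v))))) β)
          (f := fun α => ⨆ β : Γ,
          (tSpan K (bSpan K (E α) (E β)) (pSpan K (B (β + v)) (B (α + v))) ⊔
            tSpan K (pSpan K (E α) (E β)) (bSpan K (B (β + v)) (B (α + v))))))
        refine H.sub_mem (hle ?_) (hle ?_)
        · exact Submodule.mem_sup_left (Submodule.subset_span ⟨_,
            Submodule.subset_span ⟨e, he, e', he', rfl⟩, _,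
            Submodule.subset_span ⟨b', hb', b, hb, rfl⟩, rfl⟩)
        · exact Submodule.mem_sup_right (Submodule.subset_span ⟨_,
            Submodule.subset_span ⟨e, he, e', he', rfl⟩, _,
            Submodule.subset_span ⟨b', hb', b, hb, rfl⟩, rfl⟩)
  exact fun x hx y hy => key x (hHT hx) y (hHT hy)
end

section
/- Let (g,A) be a perfect compatible pair over a field k of characteristic 0. Then for every associative k-algebra F one has (g,A)(F) = F ⊗ g + Σ_{k≥1} ( I_k(F) ⊗ [g, g^{k+1}] + [F, I_{k−1}(F)] ⊗ g^{k+1} ); that is, the Lie subalgebra of F ⊗ A generated by F ⊗ g equals its upper bound tilde(g,A)(F). -/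
open Submodule TensorProduct

variable (K : Type*) [Field K]

section helpers

set_option linter.unusedSectionVars false

variable {K}

section NU
variable {R : Type*} [NonUnitalRing R] [Module K R]

lemma h_pmem {S T : Submodule K R} {a b : R} (ha : a ∈ S) (hb : b ∈ T) : a * b ∈ pSpan K S T :=
  Submodule.subset_span ⟨a, ha, b, hb, rfl⟩

lemma h_bmem {S T : Submodule K R} {a b : R} (ha : a ∈ S) (hb : b ∈ T) :
    a * b - b * a ∈ bSpan K S T :=
  Submodule.subset_span ⟨a, ha, b, hb, rfl⟩

lemma h_ple {S T U : Submodule K R} (h : ∀ a ∈ S, ∀ b ∈ T, a * b ∈ U) : pSpan K S T ≤ U := by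
  refine Submodule.span_le.2 ?_
  rintro x ⟨a, ha, b, hb, rfl⟩
  exact h a ha b hb

lemma h_ble {S T U : Submodule K R} (h : ∀ a ∈ S, ∀ b ∈ T, a * b - b * a ∈ U) :
    bSpan K S T ≤ U := by
  refine Submodule.span_le.2 ?_
  rintro x ⟨a, ha, b, hb, rfl⟩
  exact h a ha b hb

lemma h_cSp_anti (k : ℕ) : cSp K (⊤ : Submodule K R) (k+1) ≤ cSp K (⊤ : Submodule K R) k := by
  induction k with
  | zero => exact le_top
  | succ k ih => exact h_ble fun a ha b hb => h_bmem ha (ih hb)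

lemma h_mulI {S : Submodule K R} {i j l : ℕ} {c w : R} (hc : c ∈ cSp K S i)
    (hw : w ∈ IklS K S (l+1) j) : c * w ∈ IklS K S (l+2) (i+j) := by
  rw [IklS]
  have hi : i ∈ Finset.range (i+j+1) := by simp
  have : pSpan K (cSp K S i) (IklS K S (l+1) (i+j-i)) ≤
      ∑ i' ∈ Finset.range (i+j+1), pSpan K (cSp K S i') (IklS K S (l+1) (i+j-i')) :=
    Finset.single_le_sum (f := fun i' => pSpan K (cSp K S i') (IklS K S (l+1) (i+j-i')))
      (fun _ _ => bot_le) hi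
  refine this (h_pmem hc ?_)
  simpa using hw

lemma h_Ile {S U : Submodule K R} {k l : ℕ}
    (h : ∀ i j, i + j = k → ∀ c ∈ cSp K S i, ∀ w ∈ IklS K S (l+1) j, c * w ∈ U) :
    IklS K S (l+2) k ≤ U := by
  rw [IklS]
  refine Finset.sum_induction _ (fun V => V ≤ U) (fun _ _ h1 h2 => sup_le h1 h2) bot_le ?_
  refine fun i hi => h_ple fun c hc w hw => h i (k-i) ?_ c hc w hw
  have := Finset.mem_range.1 hi
  omega

lemma h_Ikl_anti (l k : ℕ) : IklS K (⊤ : Submodule K R) (l+1) (k+1) ≤ IklS K ⊤ (l+1) k := by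
  induction l with
  | zero => exact h_cSp_anti k
  | succ l ih =>
    refine h_Ile fun i j hij c hc w hw => ?_
    cases i with
    | zero =>
      obtain rfl : j = k + 1 := by omega
      have := h_mulI hc (ih hw)
      simpa using this
    | succ i =>
      have := h_mulI (h_cSp_anti i hc) hw
      rwa [show i + j = k by omega] at this

lemma h_Ik_anti (k : ℕ) : Ik K R (k+1) ≤ Ik K R k :=
  iSup_mono fun l => h_Ikl_anti l k

lemma h_Ikl_Ik (l k : ℕ) : IklS K (⊤ : Submodule K R) (l+1) k ≤ Ik K R k :=
  le_iSup (fun l : ℕ => IklS K (⊤ : Submodule K R) (l+1) k) l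

lemma h_I0 : Ik K R 0 = ⊤ := top_le_iff.1 (h_Ikl_Ik (R := R) (K := K) 0 0)

variable [SMulCommClass K R R] [IsScalarTower K R R]

/-- left multiplication -/
def hLm (a : R) : R →ₗ[K] R := LinearMap.mulLeft K a
/-- right multiplication -/
def hRm (a : R) : R →ₗ[K] R := LinearMap.mulRight K a

lemma hLm_apply (a b : R) : hLm (K := K) a b = a * b := rfl
lemma hRm_apply (a b : R) : hRm (K := K) a b = b * a := rfl

lemma h_bracket_Ikl (l k : ℕ) : ∀ f : R, ∀ p ∈ IklS K (⊤ : Submodule K R) (l+1) k,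
    f * p - p * f ∈ IklS K (⊤ : Submodule K R) (l+1) (k+1) := by
  induction l generalizing k with
  | zero => exact fun f p hp => h_bmem (S := ⊤) Submodule.mem_top hp
  | succ l ih =>
    intro f
    suffices h : IklS K (⊤ : Submodule K R) (l+1+1) k ≤
        (IklS K (⊤ : Submodule K R) (l+1+1) (k+1)).comap (hLm f - hRm f) from h
    refine h_Ile fun i j hij c hc w hw => ?_
    change f * (c * w) - c * w * f ∈ IklS K (⊤ : Submodule K R) (l+1+1) (k+1)
    have e : f * (c * w) - c * w * f = (f * c - c * f) * w + c * (f * w - w * f) := by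
      noncomm_ring
    rw [e]
    have h1 := h_mulI (i := i+1) (h_bmem (S := ⊤) (Submodule.mem_top (x := f)) hc) hw
    have h2 := h_mulI hc (ih j f w hw)
    rw [show i + 1 + j = k + 1 by omega] at h1
    rw [show i + (j + 1) = k + 1 by omega] at h2
    exact Submodule.add_mem _ h1 h2

lemma h_right_Ikl (l k : ℕ) : ∀ f : R, ∀ p ∈ IklS K (⊤ : Submodule K R) (l+1) k,
    p * f ∈ IklS K (⊤ : Submodule K R) (l+2) k := by
  induction l generalizing k with
  | zero =>
    intro f p hp
    have hf : f ∈ IklS K (⊤ : Submodule K R) 1 0 := Submodule.mem_top (R := K) (x := f)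
    exact h_mulI (i := k) (j := 0) hp hf
  | succ l ih =>
    intro f
    suffices h : IklS K (⊤ : Submodule K R) (l+1+1) k ≤
        (IklS K (⊤ : Submodule K R) (l+1+2) k).comap (hRm f) from h
    refine h_Ile fun i j hij c hc w hw => ?_
    change c * w * f ∈ IklS K (⊤ : Submodule K R) (l+1+2) k
    rw [mul_assoc, ← hij]
    exact h_mulI hc (ih j f w hw)

lemma h_bracket_Ik (k : ℕ) (f p : R) (hp : p ∈ Ik K R k) : f * p - p * f ∈ Ik K R (k+1) := by
  suffices h : Ik K R k ≤ (Ik K R (k+1)).comap (hLm f - hRm f) from h hp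
  exact iSup_le fun l q hq => h_Ikl_Ik l (k+1) (h_bracket_Ikl l k f q hq)

lemma h_right_Ik (k : ℕ) (f p : R) (hp : p ∈ Ik K R k) : p * f ∈ Ik K R k := by
  suffices h : Ik K R k ≤ (Ik K R k).comap (hRm f) from h hp
  exact iSup_le fun l q hq => h_Ikl_Ik (l+1) k (h_right_Ikl l k f q hq)

lemma h_left_Ik (k : ℕ) (f p : R) (hp : p ∈ Ik K R k) : f * p ∈ Ik K R k := by
  suffices h : Ik K R k ≤ (Ik K R k).comap (hLm f) from h hp
  refine iSup_le fun l q hq => h_Ikl_Ik (l+1) k ?_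
  have hf : f ∈ cSp K (⊤ : Submodule K R) 0 := Submodule.mem_top (R := K) (x := f)
  have := h_mulI hf hq
  simpa [hLm_apply] using this

lemma h_bI (k : ℕ) : bSpan K (⊤ : Submodule K R) (Ik K R k) ≤ Ik K R (k+1) :=
  h_ble fun f _ p hp => h_bracket_Ik k f p hp

lemma h_decomp (D : Submodule K R) (k : ℕ)
    (h1 : bSpan K (⊤ : Submodule K R) (Ik K R k) ≤ D)
    (h2 : ∀ f : R, ∀ d ∈ D, f * d ∈ D) (l : ℕ) :
    IklS K (⊤ : Submodule K R) (l+1) (k+1) ≤ D := by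
  induction l with
  | zero =>
    refine le_trans ?_ h1
    exact h_ble fun a ha b hb => h_bmem ha (h_Ikl_Ik 0 k hb)
  | succ l ih =>
    refine h_Ile ?_
    intro i
    induction i with
    | zero =>
      intro j hij c hc w hw
      obtain rfl : j = k + 1 := by omega
      exact h2 c w (ih hw)
    | succ i ihi =>
      intro j hij c hc w hw
      suffices h : cSp K (⊤ : Submodule K R) (i+1) ≤ D.comap (hRm w) from h hc
      refine h_ble fun a ha b hb => ?_
      change (a * b - b * a) * w ∈ D
      have e : (a * b - b * a) * w = (a * (b * w) - (b * w) * a) - b * (a * w - w * a) := by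
        noncomm_ring
      rw [e]
      refine Submodule.sub_mem _ (h1 (h_bmem ha ?_)) ?_
      · have := h_Ikl_Ik _ _ (h_mulI hb hw)
        rwa [show i + j = k by omega] at this
      · exact ihi (j+1) (by omega) b hb _ (h_bracket_Ikl l j a w hw)

/-- `P + F P`. -/
def hD (P : Submodule K R) : Submodule K R := P ⊔ pSpan K ⊤ P

lemma h_Ik_hD (k : ℕ) : Ik K R (k+1) ≤ hD (bSpan K (⊤ : Submodule K R) (Ik K R k)) := by
  refine iSup_le fun l => h_decomp _ k le_sup_left ?_ l
  intro f
  suffices h : hD (bSpan K (⊤ : Submodule K R) (Ik K R k)) ≤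
      (hD (bSpan K (⊤ : Submodule K R) (Ik K R k))).comap (hLm f) from h
  refine sup_le (fun p hp => ?_) (h_ple fun a _ b hb => ?_)
  · exact Submodule.mem_sup_right (h_pmem Submodule.mem_top hp)
  · change f * (a * b) ∈ hD (bSpan K (⊤ : Submodule K R) (Ik K R k))
    rw [← mul_assoc]
    exact Submodule.mem_sup_right (h_pmem Submodule.mem_top hb)

lemma h_lieGen_le (S U : Submodule K R) (hSU : S ≤ U)
    (h : ∀ s ∈ S, ∀ u ∈ U, s * u - u * s ∈ U) : lieGen K S ≤ U := by
  let N : Submodule K R := ⨅ u : U, U.comap (hRm (u : R) - hLm (u : R))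
  have hN : ∀ x, x ∈ N ↔ ∀ u ∈ U, x * u - u * x ∈ U := by
    intro x
    simp [N, hRm_apply, hLm_apply]
  refine le_trans (sInf_le (a := N ⊓ U) ⟨?_, ?_⟩) inf_le_right
  · exact le_inf (fun s hs => (hN s).2 (h s hs)) hSU
  · rintro x ⟨hx, hxU⟩ y ⟨hy, hyU⟩
    have hx' := (hN x).1 hx
    have hy' := (hN y).1 hy
    refine ⟨(hN _).2 fun u hu => ?_, hx' y hyU⟩
    have e : (x * y - y * x) * u - u * (x * y - y * x) =
      (x * (y * u - u * y) - (y * u - u * y) * x) - (y * (x * u - u * x) - (x * u - u * x) * y) := by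
      noncomm_ring
    rw [e]
    exact U.sub_mem (hx' _ (hy' u hu)) (hy' _ (hx' u hu))

lemma h_lieGen_sub (S : Submodule K R) : S ≤ lieGen K S := le_sInf fun _ hT => hT.1

lemma h_lieGen_br (S : Submodule K R) {x y : R} (hx : x ∈ lieGen K S) (hy : y ∈ lieGen K S) :
    x * y - y * x ∈ lieGen K S := by
  simp only [lieGen, Submodule.mem_sInf] at *
  exact fun T hT => hT.2 x (hx T hT) y (hy T hT)

end NU

section PW
variable {A : Type*} [Ring A] [Algebra K A] (g : Submodule K A)

lemma h_gr (n : ℕ) : ∀ x ∈ g, ∀ y ∈ gPow K g (n+1), y * x ∈ gPow K g (n+2) := by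
  induction n with
  | zero => exact fun x hx y hy => h_pmem hy hx
  | succ n ih =>
    intro x hx
    suffices h : gPow K g (n+1+1) ≤ (gPow K g (n+1+2)).comap (hRm x) from h
    refine h_ple fun a ha b hb => ?_
    change a * b * x ∈ gPow K g (n+1+2)
    rw [mul_assoc]
    exact h_pmem ha (ih x hx b hb)

lemma h_gl (n : ℕ) : ∀ x ∈ g, ∀ y ∈ gPow K g (n+1), x * y ∈ gPow K g (n+2) :=
  fun _ hx _ hy => h_pmem hx hy

variable (hg : ∀ x ∈ g, ∀ y ∈ g, x * y - y * x ∈ g)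
include hg

lemma h_gb (n : ℕ) : ∀ x ∈ g, ∀ y ∈ gPow K g (n+1), x * y - y * x ∈ gPow K g (n+1) := by
  induction n with
  | zero => exact hg
  | succ n ih =>
    intro x hx
    suffices h : gPow K g (n+1+1) ≤ (gPow K g (n+1+1)).comap (hLm x - hRm x) from h
    refine h_ple fun a ha b hb => ?_
    change x * (a * b) - a * b * x ∈ gPow K g (n+1+1)
    have e : x * (a * b) - a * b * x = (x * a - a * x) * b + a * (x * b - b * x) := by
      noncomm_ring
    rw [e]
    exact Submodule.add_mem _ (h_pmem (hg x hx a ha) hb) (h_pmem ha (ih x hx b hb))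

lemma h_bgle (n : ℕ) : bSpan K g (gPow K g (n+1)) ≤ gPow K g (n+1) :=
  h_ble (h_gb g hg n)

omit hg in
lemma h_list (n : ℕ) (l : List A) (hl : l.length = n+1) (h : ∀ x ∈ l, x ∈ g) :
    l.prod ∈ gPow K g (n+1) := by
  induction n generalizing l with
  | zero =>
    obtain ⟨a, rfl⟩ := List.length_eq_one_iff.1 hl
    simpa [gPow] using h
  | succ n ih =>
    cases l with
    | nil => simp at hl
    | cons a l =>
      rw [List.prod_cons]
      exact h_pmem (h a (by simp)) (ih l (by simpa using hl) fun x hx => h x (by simp [hx]))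

omit hg in
lemma h_span (n : ℕ) : gPow K g (n+1) ≤
    Submodule.span K {z | ∃ l : List A, l.length = n+1 ∧ (∀ x ∈ l, x ∈ g) ∧ z = l.prod} := by
  induction n with
  | zero => exact fun x hx => Submodule.subset_span ⟨[x], by simp, by simpa [gPow] using hx, by simp⟩
  | succ n ih =>
    refine h_ple fun a ha b hb => ?_
    suffices h : gPow K g (n+1) ≤ (Submodule.span K {z | ∃ l : List A, l.length = n+1+1 ∧
      (∀ x ∈ l, x ∈ g) ∧ z = l.prod}).comap (hLm a) from h hb
    refine ih.trans (Submodule.span_le.2 ?_)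
    rintro z ⟨l, hl, hm, rfl⟩
    refine Submodule.subset_span ⟨a :: l, by simpa using hl, ?_, by simp [hLm_apply]⟩
    simpa using ⟨ha, hm⟩

end PW

section T
variable {F : Type*} [NonUnitalRing F] [Module K F] [SMulCommClass K F F] [IsScalarTower K F F]
    {A : Type*} [Ring A] [Algebra K A] (g : Submodule K A)
    (hg : ∀ x ∈ g, ∀ y ∈ g, x * y - y * x ∈ g) (L : Submodule K (F ⊗[K] A))
    (hL1 : ∀ f : F, ∀ x ∈ g, f ⊗ₜ[K] x ∈ L)
    (hL2 : ∀ x ∈ L, ∀ y ∈ L, x * y - y * x ∈ L)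

lemma h_tle {S : Submodule K F} {T : Submodule K A} {U : Submodule K (F ⊗[K] A)}
    (h : ∀ f ∈ S, ∀ a ∈ T, f ⊗ₜ[K] a ∈ U) : tSpan K S T ≤ U := by
  refine Submodule.span_le.2 ?_
  rintro x ⟨a, ha, b, hb, rfl⟩
  exact h a ha b hb

lemma h_tmem {S : Submodule K F} {T : Submodule K A} {f : F} {a : A} (hf : f ∈ S) (ha : a ∈ T) :
    f ⊗ₜ[K] a ∈ tSpan K S T := Submodule.subset_span ⟨f, hf, a, ha, rfl⟩

lemma h_extL {S : Submodule K F} {a : A} (s : Set F) (hS : S ≤ Submodule.span K s)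
    (h : ∀ f ∈ s, f ⊗ₜ[K] a ∈ L) : ∀ f ∈ S, f ⊗ₜ[K] a ∈ L := by
  have : S ≤ L.comap ((TensorProduct.mk K F A).flip a) := hS.trans (Submodule.span_le.2 h)
  exact this

lemma h_extR {T : Submodule K A} {f : F} (s : Set A) (hT : T ≤ Submodule.span K s)
    (h : ∀ a ∈ s, f ⊗ₜ[K] a ∈ L) : ∀ a ∈ T, f ⊗ₜ[K] a ∈ L := by
  have : T ≤ L.comap (TensorProduct.mk K F A f) := hT.trans (Submodule.span_le.2 h)
  exact this

include hg hL1 hL2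

lemma h_symm [CharZero K] (P : Submodule K F) (n : ℕ) (hP : ∀ f : F, ∀ p ∈ P, f * p - p * f ∈ P)
    (h : ∀ p ∈ P, ∀ y ∈ gPow K g (n+1), p ⊗ₜ[K] y ∈ L) (f p : F) (hp : p ∈ P) :
    ∀ w ∈ gPow K g (n+2), (f * p - p * f) ⊗ₜ[K] w ∈ L := by
  refine h_extR L _ (h_span g (n+1)) ?_
  rintro z ⟨l, hl, hm, rfl⟩
  -- one rotation
  have key : ∀ l : List A, l.length = n+1+1 → (∀ x ∈ l, x ∈ g) →
      (f * p) ⊗ₜ[K] l.prod - (p * f) ⊗ₜ[K] (l.rotate 1).prod ∈ L ∧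
      (f * p - p * f) ⊗ₜ[K] ((l.rotate 1).prod - l.prod) ∈ L := by
    intro l hl hm
    cases l with
    | nil => simp at hl
    | cons a l =>
      have ha : a ∈ g := hm a (by simp)
      have hy : l.prod ∈ gPow K g (n+1) :=
        h_list g n l (by simpa using hl) fun x hx => hm x (by simp [hx])
      have e : ((a :: l).rotate 1).prod = l.prod * a := by simp
      rw [e, List.prod_cons]
      constructor
      · have := hL2 _ (hL1 f a ha) _ (h p hp _ hy)
        rwa [Algebra.TensorProduct.tmul_mul_tmul, Algebra.TensorProduct.tmul_mul_tmul] at this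
      · refine h _ (hP f p hp) _ ?_
        rw [← neg_sub]
        exact Submodule.neg_mem _ (h_gb g hg n a ha _ hy)
  have hrot : ∀ i, (l.rotate i).length = n+1+1 ∧ ∀ x ∈ l.rotate i, x ∈ g := fun i =>
    ⟨by simpa using hl, fun x hx => hm x (List.mem_rotate.1 hx)⟩
  have hdiff : ∀ i, (f * p - p * f) ⊗ₜ[K] ((l.rotate i).prod - l.prod) ∈ L := by
    intro i
    induction i with
    | zero => simp
    | succ i ih =>
      have := L.add_mem (key _ (hrot i).1 (hrot i).2).2 ih
      rwa [← TensorProduct.tmul_add, sub_add_sub_cancel, List.rotate_rotate] at this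
  have hsum : ∑ i ∈ Finset.range (n+2), ((f * p) ⊗ₜ[K] (l.rotate i).prod -
      (p * f) ⊗ₜ[K] (l.rotate (i+1)).prod) ∈ L := by
    refine Submodule.sum_mem _ fun i _ => ?_
    have := (key _ (hrot i).1 (hrot i).2).1
    rwa [List.rotate_rotate] at this
  have hshift : ∑ i ∈ Finset.range (n+2), (l.rotate (i+1)).prod =
      ∑ i ∈ Finset.range (n+2), (l.rotate i).prod := by
    have h1 := Finset.sum_range_succ (fun i => (l.rotate i).prod) (n+2)
    have h2 := Finset.sum_range_succ' (fun i => (l.rotate i).prod) (n+2)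
    have h3 : l.rotate (n+2) = l := by
      have := List.rotate_length l
      rwa [hl] at this
    rw [h3] at h1
    rw [List.rotate_zero] at h2
    exact add_right_cancel (h2.symm.trans h1)
  rw [Finset.sum_sub_distrib, ← TensorProduct.tmul_sum, ← TensorProduct.tmul_sum, hshift,
    ← TensorProduct.sub_tmul] at hsum
  have hsum2 : ∑ i ∈ Finset.range (n+2), (f * p - p * f) ⊗ₜ[K] ((l.rotate i).prod - l.prod) ∈ L :=
    Submodule.sum_mem _ fun i _ => hdiff i
  rw [← TensorProduct.tmul_sum, Finset.sum_sub_distrib] at hsum2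
  have h4 := L.sub_mem hsum hsum2
  rw [← TensorProduct.tmul_sub, sub_sub_cancel, Finset.sum_const, Finset.card_range,
    ← Nat.cast_smul_eq_nsmul K, TensorProduct.tmul_smul] at h4
  exact (Submodule.smul_mem_iff _ (by exact_mod_cast Nat.succ_ne_zero (n+1))).1 h4

lemma h_B [CharZero K] (P : Submodule K F) (n : ℕ) (hP : ∀ f : F, ∀ p ∈ P, f * p - p * f ∈ P)
    (h : ∀ p ∈ P, ∀ y ∈ gPow K g (n+1), p ⊗ₜ[K] y ∈ L) :
    ∀ q ∈ hD P, ∀ w ∈ bSpan K g (gPow K g (n+1)), q ⊗ₜ[K] w ∈ L := by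
  intro q hq
  refine h_extR L _ le_rfl ?_
  rintro w ⟨x, hx, y, hy, rfl⟩
  suffices hh : hD P ≤ L.comap ((TensorProduct.mk K F A).flip (x * y - y * x)) from hh hq
  refine sup_le (fun p hp => h p hp _ (h_gb g hg n x hx y hy)) (h_ple fun f _ p hp => ?_)
  change (f * p) ⊗ₜ[K] (x * y - y * x) ∈ L
  have h1 := hL2 _ (hL1 f x hx) _ (h p hp _ hy)
  rw [Algebra.TensorProduct.tmul_mul_tmul, Algebra.TensorProduct.tmul_mul_tmul] at h1
  have h2 := h_symm g hg L hL1 hL2 P n hP h f p hp _ (h_gr g n x hx y hy)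
  have h3 := L.sub_mem h1 h2
  convert h3 using 1
  rw [TensorProduct.sub_tmul, TensorProduct.tmul_sub]
  abel

lemma h_main [CharZero K] (hperfect : ∀ k : ℕ, 2 ≤ k →
      pSpan K (bSpan K g (gPow K g k)) g ⊔ (gPow K g k ⊓ gPow K g (k + 1)) =
        gPow K g (k + 1)) (k : ℕ) :
    (∀ p ∈ bSpan K (⊤ : Submodule K F) (Ik K F k), ∀ y ∈ gPow K g (k+2), p ⊗ₜ[K] y ∈ L) ∧
    (∀ q ∈ Ik K F (k+1), ∀ w ∈ bSpan K g (gPow K g (k+2)), q ⊗ₜ[K] w ∈ L) := by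
  have AB : ∀ k : ℕ,
      (∀ p ∈ bSpan K (⊤ : Submodule K F) (Ik K F k), ∀ y ∈ gPow K g (k+2), p ⊗ₜ[K] y ∈ L) →
      (∀ q ∈ Ik K F (k+1), ∀ w ∈ bSpan K g (gPow K g (k+2)), q ⊗ₜ[K] w ∈ L) := by
    intro k h q hq
    refine h_B g hg L hL1 hL2 (bSpan K (⊤ : Submodule K F) (Ik K F k)) (k+1) ?_ h q (h_Ik_hD k hq)
    exact fun f p hp => h_bmem Submodule.mem_top (h_Ik_anti k (h_bI k hp))
  refine ⟨?_, AB k ?_⟩ <;>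
  · induction k with
    | zero =>
      intro p hp y hy
      refine h_extL L _ le_rfl ?_ p hp
      rintro _ ⟨a, _, b, _, rfl⟩
      exact h_symm g hg L hL1 hL2 ⊤ 0 (fun _ _ _ => Submodule.mem_top) (fun p _ y hy => hL1 p y hy)
        a b Submodule.mem_top y hy
    | succ k ih =>
      intro p hp y hy
      have hB := AB k ih
      refine h_extL L _ le_rfl ?_ p hp
      rintro _ ⟨f, _, q, hq, rfl⟩
      rw [← hperfect (k+2) (by omega)] at hy
      suffices hh : pSpan K (bSpan K g (gPow K g (k+2))) g ⊔ (gPow K g (k+2) ⊓ gPow K g (k+2+1)) ≤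
        L.comap (TensorProduct.mk K F A (f * q - q * f)) from hh hy
      refine sup_le (h_ple fun w hw x hx => ?_) ?_
      · change (f * q - q * f) ⊗ₜ[K] (w * x) ∈ L
        have h1 := hL2 _ (hL1 f x hx) _ (hB q hq w hw)
        rw [Algebra.TensorProduct.tmul_mul_tmul, Algebra.TensorProduct.tmul_mul_tmul] at h1
        have h2 := hB _ (h_left_Ik _ f q hq) _
          (h_bmem hx (h_bgle g hg (k+1) hw))
        have h3 := L.sub_mem h1 h2
        convert h3 using 1
        rw [TensorProduct.sub_tmul, TensorProduct.tmul_sub]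
        abel
      · rintro z ⟨hz, _⟩
        exact ih _ (h_bmem Submodule.mem_top (h_Ik_anti k hq)) z hz

end T

end helpers

/-- for a perfect compatible pair `(g, A)`, the current Lie algebra
equals its upper bound:
`(g,A)(F) = F ⊗ g + Σ_{k ≥ 1} ( I_k(F) ⊗ [g, g^{k+1}] + [F, I_{k-1}(F)] ⊗ g^{k+1} )`. -/
theorem statement13 {K : Type*} [Field K] [CharZero K]
    {F : Type*} [NonUnitalRing F] [Module K F] [SMulCommClass K F F] [IsScalarTower K F F]
    {A : Type*} [Ring A] [Algebra K A]
    (g : Submodule K A) (hg : ∀ x ∈ g, ∀ y ∈ g, x * y - y * x ∈ g)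
    (hperfect : ∀ k : ℕ, 2 ≤ k →
      pSpan K (bSpan K g (gPow K g k)) g ⊔ (gPow K g k ⊓ gPow K g (k + 1)) =
        gPow K g (k + 1)) :
    currentLie K (F := F) g =
      tSpan K (⊤ : Submodule K F) g ⊔
        ⨆ k : ℕ, (tSpan K (Ik K F (k + 1)) (bSpan K g (gPow K g (k + 2))) ⊔
          tSpan K (bSpan K (⊤ : Submodule K F) (Ik K F k)) (gPow K g (k + 2))) := by
  apply le_antisymm
  · refine h_lieGen_le _ _ le_sup_left ?_
    set U := tSpan K (⊤ : Submodule K F) g ⊔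
        ⨆ k : ℕ, (tSpan K (Ik K F (k + 1)) (bSpan K g (gPow K g (k + 2))) ⊔
          tSpan K (bSpan K (⊤ : Submodule K F) (Ik K F k)) (gPow K g (k + 2))) with hU
    have m0 : ∀ (f : F), ∀ x ∈ g, f ⊗ₜ[K] x ∈ U := fun f x hx =>
      Submodule.mem_sup_left (h_tmem Submodule.mem_top hx)
    have m1 : ∀ (k : ℕ), ∀ p ∈ Ik K F (k+1), ∀ y ∈ bSpan K g (gPow K g (k + 2)),
        p ⊗ₜ[K] y ∈ U := fun k p hp y hy =>
      Submodule.mem_sup_right (Submodule.mem_iSup_of_mem k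
        (Submodule.mem_sup_left (h_tmem hp hy)))
    have m2 : ∀ (k : ℕ), ∀ p ∈ bSpan K (⊤ : Submodule K F) (Ik K F k), ∀ y ∈ gPow K g (k + 2),
        p ⊗ₜ[K] y ∈ U := fun k p hp y hy =>
      Submodule.mem_sup_right (Submodule.mem_iSup_of_mem k
        (Submodule.mem_sup_right (h_tmem hp hy)))
    intro s hs u hu
    suffices h : tSpan K (⊤ : Submodule K F) g ≤ U.comap (hRm u - hLm u) from h hs
    refine h_tle fun f _ x hx => ?_
    suffices h : U ≤ U.comap (hLm (f ⊗ₜ[K] x) - hRm (f ⊗ₜ[K] x)) from h hu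
    have br : ∀ (p : F) (y : A), (f * p - p * f) ⊗ₜ[K] (x * y) ∈ U →
        (p * f) ⊗ₜ[K] (x * y - y * x) ∈ U →
        p ⊗ₜ[K] y ∈ U.comap (hLm (f ⊗ₜ[K] x) - hRm (f ⊗ₜ[K] x)) := by
      intro p y h1 h2
      change (f ⊗ₜ[K] x) * (p ⊗ₜ[K] y) - (p ⊗ₜ[K] y) * (f ⊗ₜ[K] x) ∈ U
      rw [Algebra.TensorProduct.tmul_mul_tmul, Algebra.TensorProduct.tmul_mul_tmul]
      convert U.add_mem h1 h2 using 1
      rw [TensorProduct.sub_tmul, TensorProduct.tmul_sub]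
      abel
    refine sup_le (h_tle fun p _ y hy => ?_) (iSup_le fun k => sup_le
      (h_tle fun p hp y hy => ?_) (h_tle fun p hp y hy => ?_))
    · refine br p y (m2 0 _ (h_bmem Submodule.mem_top ?_) _ (h_pmem hx hy)) (m0 _ _ (hg x hx y hy))
      rw [h_I0]; exact Submodule.mem_top
    · have hy2 := h_bgle g hg (k+1) hy
      exact br p y (m2 (k+1) _ (h_bmem Submodule.mem_top hp) _ (h_pmem hx hy2))
        (m1 k _ (h_right_Ik _ f p hp) _ (h_bmem hx hy2))
    · have hp2 := h_bI k hp
      exact br p y (m2 (k+1) _ (h_bmem Submodule.mem_top hp2) _ (h_pmem hx hy))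
        (m1 k _ (h_right_Ik _ f p hp2) _ (h_bmem hx hy))
  · have hL1 : ∀ f : F, ∀ x ∈ g, f ⊗ₜ[K] x ∈ currentLie K (F := F) g := fun f x hx =>
      h_lieGen_sub _ (h_tmem Submodule.mem_top hx)
    have hL2 : ∀ x ∈ currentLie K (F := F) g, ∀ y ∈ currentLie K (F := F) g,
        x * y - y * x ∈ currentLie K (F := F) g := fun x hx y hy => h_lieGen_br _ hx hy
    refine sup_le (h_lieGen_sub _) (iSup_le fun k => ?_)
    have := h_main g hg _ hL1 hL2 hperfect k
    exact sup_le (h_tle this.2) (h_tle this.1)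
end

section
/- Let K be an algebraically closed field of characteristic 0 and (g,A) a compatible pair over K such that g is strongly graded, i.e. there exists h₀ ∈ g such that the operator ad h₀ : g → g is diagonalizable with eigenspace decomposition g = ⊕_{c∈K} g_c, and the nullspace g₀ is spanned by the subspaces [g_c, g_{−c}] for c ∈ K \ {0}. Then (g,A) is perfect, i.e. [g, g^k]·g + (g^k ∩ g^{k+1}) = g^{k+1} for all k ≥ 2. -/
open Submodule TensorProduct

variable (K : Type*) [Field K]

theorem pSpan_eq_mul' {K : Type*} [Field K] {A : Type*} [Ring A] [Algebra K A]
    (S T : Submodule K A) : pSpan K S T = S * T := by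
  apply le_antisymm
  · refine Submodule.span_le.2 ?_
    rintro x ⟨a, ha, b, hb, rfl⟩
    exact Submodule.mul_mem_mul ha hb
  · refine Submodule.mul_le.2 fun a ha b hb => Submodule.subset_span ⟨a, ha, b, hb, rfl⟩

theorem gPow_eq_pow' {K : Type*} [Field K] {A : Type*} [Ring A] [Algebra K A]
    (g : Submodule K A) (n : ℕ) : gPow K g (n + 1) = g ^ (n + 1) := by
  induction n with
  | zero => simp [gPow]
  | succ n ih => rw [gPow, ih, pSpan_eq_mul', pow_succ' g (n + 1)]

theorem comm_pow_mem {K : Type*} [Field K] {A : Type*} [Ring A] [Algebra K A]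
    (g : Submodule K A) (hg : ∀ x ∈ g, ∀ y ∈ g, x * y - y * x ∈ g) (n : ℕ)
    (b : A) (hb : b ∈ g) (u : A) (hu : u ∈ g ^ n) : b * u - u * b ∈ g ^ n := by
  induction n generalizing u with
  | zero =>
    rw [pow_zero, Submodule.mem_one] at hu
    obtain ⟨r, rfl⟩ := hu
    rw [Algebra.commutes r b, sub_self]
    exact Submodule.zero_mem _
  | succ n ih =>
    rw [pow_succ] at hu ⊢
    induction hu using Submodule.mul_induction_on' with
    | mem_mul_mem m hm y hy =>
      have : b * (m * y) - m * y * b = (b * m - m * b) * y + m * (b * y - y * b) := by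
        noncomm_ring
      rw [this]
      exact Submodule.add_mem _ (Submodule.mul_mem_mul (ih m hm) hy)
        (Submodule.mul_mem_mul hm (hg _ hb _ hy))
    | add x hx y hy h1 h2 =>
      have : b * (x + y) - (x + y) * b = (b * x - x * b) + (b * y - y * b) := by noncomm_ring
      rw [this]
      exact Submodule.add_mem _ h1 h2

theorem list_prod_mem_pow' {K : Type*} [Field K] {A : Type*} [Ring A] [Algebra K A]
    (g : Submodule K A) (l : List A) (hl : ∀ x ∈ l, x ∈ g) : l.prod ∈ g ^ l.length := by
  induction l with
  | nil => simp [Submodule.one_le.1 le_rfl]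
  | cons a t ih =>
    rw [List.prod_cons, List.length_cons, pow_succ']
    exact Submodule.mul_mem_mul (hl a (by simp)) (ih fun x hx => hl x (by simp [hx]))

theorem eig_mul {K : Type*} [Field K] {A : Type*} [Ring A] [Algebra K A]
    (h u v : A) (c d : K) (hu : h * u - u * h = c • u) (hv : h * v - v * h = d • v) :
    h * (u * v) - u * v * h = (c + d) • (u * v) := by
  have : h * (u * v) - u * v * h = (h * u - u * h) * v + u * (h * v - v * h) := by noncomm_ring
  rw [this, hu, hv, add_smul, smul_mul_assoc, mul_smul_comm]

theorem eig_list {K : Type*} [Field K] {A : Type*} [Ring A] [Algebra K A]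
    (h : A) (wt : A → K) (l : List A) (hl : ∀ x ∈ l, h * x - x * h = wt x • x) :
    h * l.prod - l.prod * h = (l.map wt).sum • l.prod := by
  induction l with
  | nil => simp
  | cons a t ih =>
    rw [List.prod_cons, List.map_cons, List.sum_cons]
    exact eig_mul _ _ _ _ _ (hl a (by simp)) (ih fun x hx => hl x (by simp [hx]))

/-- over an algebraically closed field of characteristic zero, if `g`
is strongly graded (there is `h₀ ∈ g` with `ad h₀` diagonalizable and the nullspace
spanned by the `[g_c, g_{−c}]`, `c ≠ 0`), then the compatible pair `(g, A)` is perfect. -/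
theorem statement14 {K : Type*} [Field K] [CharZero K] [IsAlgClosed K]
    {A : Type*} [Ring A] [Algebra K A]
    (g : Submodule K A) (hg : ∀ x ∈ g, ∀ y ∈ g, x * y - y * x ∈ g)
    (h₀ : A) (hh₀ : h₀ ∈ g)
    (gc : K → Submodule K A)
    (hgc : ∀ (c : K) (x : A), x ∈ gc c ↔ x ∈ g ∧ h₀ * x - x * h₀ = c • x)
    (hdiag : (⨆ c : K, gc c) = g)
    (hnull : gc 0 = ⨆ c : {c : K // c ≠ 0}, bSpan K (gc (c : K)) (gc (-(c : K)))) :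
    ∀ k : ℕ, 2 ≤ k →
      pSpan K (bSpan K g (gPow K g k)) g ⊔ (gPow K g k ⊓ gPow K g (k + 1)) =
        gPow K g (k + 1) := by
  intro k hk
  obtain ⟨m, rfl⟩ : ∃ m, k = m + 1 := ⟨k - 1, by omega⟩
  rw [gPow_eq_pow', gPow_eq_pow', pSpan_eq_mul']
  apply le_antisymm
  · refine sup_le ?_ inf_le_right
    rw [pow_succ g (m + 1)]
    refine mul_le_mul' (Submodule.span_le.2 ?_) le_rfl
    rintro _ ⟨a, ha, b, hb, rfl⟩
    exact comm_pow_mem g hg _ a ha b hb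
  set W := bSpan K g (g ^ (m + 1)) * g ⊔ (g ^ (m + 1) ⊓ g ^ (m + 1 + 1)) with hW
  -- commutators times `g`
  have hB : ∀ b ∈ g, ∀ u ∈ g ^ (m + 1), ∀ z ∈ g, (b * u - u * b) * z ∈ W := by
    intro b hb u hu z hz
    exact Submodule.mem_sup_left
      (Submodule.mul_mem_mul (Submodule.subset_span ⟨b, hb, u, hu, rfl⟩) hz)
  have hrot : ∀ x ∈ g, ∀ u ∈ g ^ (m + 1), u * x ∈ W → x * u ∈ W := by
    intro x hx u hu h
    have h1 : x * u - u * x ∈ W := by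
      refine Submodule.mem_sup_right ⟨comm_pow_mem g hg _ x hx u hu, ?_⟩
      refine Submodule.sub_mem _ ?_ ?_
      · rw [pow_succ']; exact Submodule.mul_mem_mul hx hu
      · rw [pow_succ]; exact Submodule.mul_mem_mul hu hx
    simpa using Submodule.add_mem _ h1 h
  have hE : ∀ (c : K) (u : A), c ≠ 0 → u ∈ g ^ (m + 1) → h₀ * u - u * h₀ = c • u →
      ∀ z ∈ g, u * z ∈ W := by
    intro c u hc hu he z hz
    have := Submodule.smul_mem _ c⁻¹ (hB h₀ hh₀ u hu z hz)
    rwa [he, smul_mul_assoc, smul_smul, inv_mul_cancel₀ hc, one_smul] at this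
  -- rotation of lists
  have hrotl : ∀ l1 l2 : List A, (∀ x ∈ l1, x ∈ g) → (∀ x ∈ l2, x ∈ g) →
      l1.length + l2.length = m + 1 + 1 → (l2 ++ l1).prod ∈ W → (l1 ++ l2).prod ∈ W := by
    intro l1
    induction l1 with
    | nil => intro l2 _ _ _ h; simpa using h
    | cons a t ih =>
      intro l2 h1 h2 hlen h
      have h1' : ∀ x ∈ t, x ∈ g := fun x hx => h1 x (by simp [hx])
      have ha : a ∈ g := h1 a (by simp)
      have key := ih (l2 ++ [a]) h1' (by
        intro x hx
        rcases List.mem_append.1 hx with hx | hx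
        · exact h2 x hx
        · rw [List.mem_singleton.1 hx]; exact ha) (by simp at hlen ⊢; omega) (by simpa using h)
      rw [List.cons_append, List.prod_cons]
      refine hrot a ha _ ?_ (by simpa [mul_assoc] using key)
      have := list_prod_mem_pow' g (t ++ l2) (by
        intro x hx
        rcases List.mem_append.1 hx with hx | hx
        · exact h1' x hx
        · exact h2 x hx)
      rwa [show (t ++ l2).length = m + 1 by simp at hlen ⊢; omega] at this
  -- all weights zero
  have hzero : ∀ x ∈ gc 0, ∀ r ∈ g ^ m, h₀ * r - r * h₀ = (0 : K) • r → ∀ z ∈ gc 0,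
      x * (r * z) ∈ W := by
    intro x hx r hr her z hz
    rw [hgc] at hz
    suffices H : gc 0 ≤ W.comap (LinearMap.mulRight K (r * z)) from H hx
    rw [hnull]
    refine iSup_le ?_
    rintro ⟨c, hc⟩
    refine Submodule.span_le.2 ?_
    rintro _ ⟨a, ha, b, hb, rfl⟩
    rw [hgc] at ha hb
    change (a * b - b * a) * (r * z) ∈ W
    have hv : b * r - r * b ∈ g ^ m := comm_pow_mem g hg m b hb.1 r hr
    have hve : h₀ * (b * r - r * b) - (b * r - r * b) * h₀ = (-c) • (b * r - r * b) := by
      have e1 := eig_mul _ _ _ _ _ hb.2 her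
      have e2 := eig_mul _ _ _ _ _ her hb.2
      rw [add_zero] at e1
      rw [zero_add] at e2
      rw [smul_sub, ← e1, ← e2]
      noncomm_ring
    have hvz : (b * r - r * b) * z ∈ g ^ (m + 1) := by
      rw [pow_succ]; exact Submodule.mul_mem_mul hv hz.1
    have hvze := eig_mul _ _ _ _ _ hve hz.2
    rw [add_zero] at hvze
    have t1 := hrot a ha.1 _ hvz (hE (-c) _ (neg_ne_zero.2 hc) hvz hvze a ha.1)
    have har : a * r ∈ g ^ (m + 1) := by
      rw [pow_succ']; exact Submodule.mul_mem_mul ha.1 hr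
    have t2 := hB b hb.1 _ har z hz.1
    have : (a * b - b * a) * (r * z)
        = a * ((b * r - r * b) * z) - (b * (a * r) - a * r * b) * z := by noncomm_ring
    rw [this]
    exact Submodule.sub_mem _ t1 t2
  -- homogeneous lists
  classical
  let wt : A → K := fun x => if h : ∃ c, x ∈ gc c then h.choose else 0
  have hwt : ∀ x, (∃ c, x ∈ gc c) → x ∈ gc (wt x) := by
    intro x h
    simp only [wt, dif_pos h]
    exact h.choose_spec
  have hlist : ∀ l : List A, l.length = m + 1 + 1 → (∀ x ∈ l, ∃ c, x ∈ gc c) → l.prod ∈ W := by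
    intro l hlen hl
    have hlg : ∀ x ∈ l, x ∈ g := fun x hx => ((hgc _ _).1 (hwt x (hl x hx))).1
    have hle : ∀ x ∈ l, h₀ * x - x * h₀ = wt x • x :=
      fun x hx => ((hgc _ _).1 (hwt x (hl x hx))).2
    by_cases hall : ∀ x ∈ l, wt x = (l.map wt).sum
    · have hs : (l.map wt).sum = (l.map wt).length • (l.map wt).sum := by
        apply List.sum_eq_card_nsmul
        intro y hy
        obtain ⟨x, hx, rfl⟩ := List.mem_map.1 hy
        exact hall x hx
      rw [List.length_map, hlen, succ_nsmul] at hs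
      have hT : (l.map wt).sum = 0 := by
        have := (right_eq_add.1 hs)
        rcases smul_eq_zero.1 this with h | h
        · omega
        · exact h
      have h0 : ∀ x ∈ l, x ∈ gc 0 := by
        intro x hx
        have := hwt x (hl x hx)
        rwa [hall x hx, hT] at this
      obtain ⟨x, t, rfl⟩ : ∃ x t, l = x :: t := List.exists_cons_of_length_eq_add_one hlen
      have htne : t ≠ [] := by rintro rfl; simp at hlen
      obtain ⟨r, z, rfl⟩ : ∃ r z, t = r ++ [z] :=
        ⟨t.dropLast, t.getLast htne, (List.dropLast_append_getLast htne).symm⟩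
      have hrl : r.length = m := by simpa using hlen
      have := hzero x (h0 x (by simp)) r.prod
        (by rw [← hrl]; exact list_prod_mem_pow' g r fun y hy => hlg y (by simp [hy]))
        (by
          have := eig_list h₀ (fun _ => (0 : K)) r
            (fun y hy => ((hgc _ _).1 (h0 y (by simp [hy]))).2)
          simpa using this) z (h0 z (by simp))
      simpa using this
    · push Not at hall
      obtain ⟨x, hx, hne⟩ := hall
      obtain ⟨l1, l2, rfl⟩ := List.append_of_mem hx
      have hm : ∀ y ∈ l2 ++ l1, y ∈ l1 ++ x :: l2 := by
        intro y hy; simp at hy ⊢; tauto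
      have e : l1 ++ x :: l2 = (l1 ++ [x]) ++ l2 := by simp
      have hu := list_prod_mem_pow' g (l2 ++ l1) fun y hy => hlg y (hm y hy)
      rw [show (l2 ++ l1).length = m + 1 by simp at hlen ⊢; omega] at hu
      have he := eig_list h₀ wt (l2 ++ l1) fun y hy => hle y (hm y hy)
      have hfin := hE _ _ (by
        intro h
        apply hne
        simp at h ⊢
        linear_combination -h) hu he x (hlg x hx)
      rw [e]
      apply hrotl
      · intro y hy; apply hlg; simp at hy ⊢; tauto
      · intro y hy; apply hlg; simp at hy ⊢; tauto
      · simp at hlen ⊢; omega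
      · simpa [mul_assoc] using hfin
  have hspan : g = Submodule.span K (⋃ c, (gc c : Set A)) := by
    rw [← hdiag, Submodule.iSup_eq_span]
  open scoped Pointwise in
  have hpow : g ^ (m + 1 + 1) = Submodule.span K ((⋃ c, (gc c : Set A)) ^ (m + 1 + 1)) := by
    rw [← Submodule.span_pow, ← hspan]
  rw [hpow]
  refine Submodule.span_le.2 ?_
  intro y hy
  obtain ⟨f, rfl⟩ := Set.mem_pow.1 hy
  refine hlist _ (by simp) ?_
  intro x hx
  obtain ⟨i, rfl⟩ := (List.mem_ofFn' _ _).1 hx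
  exact Set.mem_iUnion.1 (f i).2
end

section
/- Let k be a field of characteristic 0, n ≥ 2, A = M_n(k), and let Φ₀ be the bilinear form on k^n given by Φ₀(x,y) = x₁y_n + x₂y_{n−1} + ⋯ + x_n y₁; alternatively, for n = 2m let Φ₁ be the form Φ₁(x,y) = x₁y_{2m} + ⋯ + x_m y_{m+1} − x_{m+1}y_m − ⋯ − x_{2m}y₁. Let g = o(Φ) ⊆ A be the orthogonal Lie algebra of Φ = Φ₀ or Φ = Φ₁, i.e. o(Φ) = {M ∈ M_n(k) : Φ(Mu,v) + Φ(u,Mv) = 0 for all u,v}. Let F be a unital associative k-algebra. Then an invertible diagonal matrix D = diag(f₁,…,f_n) ∈ GL_n(F) (with each f_i ∈ F invertible) satisfies D·(g,A)(F)·D^{−1} = (g,A)(F) if and only if f_i f_{n−i+1} − f₁ f_n ∈ I₁(F) = F·[F,F] for i = 1,…,n. -/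
open Submodule TensorProduct

variable (K : Type*) [Field K]

/-- The current Lie algebra `(g, M_n(k))(F)` realized inside `M_n(F)`:
the Lie subalgebra of `M_n(F)` generated by the subspace `F ⊗ g`,
i.e. by all matrices `u • M` with `u ∈ F` and `M ∈ g ⊆ M_n(k)`. -/
def matCurrent (K : Type*) [Field K] {n : ℕ} (Fa : Type*) [Ring Fa] [Algebra K Fa]
    (g : Submodule K (Matrix (Fin n) (Fin n) K)) :
    Submodule K (Matrix (Fin n) (Fin n) Fa) :=
  lieGen K (Submodule.span K
    {X : Matrix (Fin n) (Fin n) Fa | ∃ u : Fa, ∃ M ∈ g, X = u • M.map (algebraMap K Fa)})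

theorem aux_quot.{u, v} {K : Type u} [Field K] {Fa : Type v} [Ring Fa] [Algebra K Fa] :
    ∃ (C : Type v) (_ : CommRing C) (q : Fa →+* C),
      ∀ x, q x = 0 ↔ x ∈ pSpan K (⊤ : Submodule K Fa) (bSpan K ⊤ ⊤) := by
  have hl : ∀ a x : Fa, x ∈ pSpan K (⊤ : Submodule K Fa) (bSpan K ⊤ ⊤) →
      a * x ∈ pSpan K (⊤ : Submodule K Fa) (bSpan K ⊤ ⊤) := by
    intro a x hx
    unfold pSpan at hx
    induction hx using Submodule.span_induction with
    | mem x h =>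
      obtain ⟨b, _, c, hc, rfl⟩ := h
      exact Submodule.subset_span ⟨a * b, trivial, c, hc, (mul_assoc a b c).symm⟩
    | zero => simp
    | add x y _ _ h1 h2 => rw [mul_add]; exact Submodule.add_mem _ h1 h2
    | smul c x _ h => rw [mul_smul_comm]; exact Submodule.smul_mem _ c h
  have hc : ∀ a b : Fa, a * b - b * a ∈ pSpan K (⊤ : Submodule K Fa) (bSpan K ⊤ ⊤) := by
    intro a b
    exact Submodule.subset_span ⟨1, trivial, a * b - b * a,
      Submodule.subset_span ⟨a, trivial, b, trivial, rfl⟩, (one_mul _).symm⟩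
  let I : Ideal Fa :=
    { carrier := {x | x ∈ pSpan K (⊤ : Submodule K Fa) (bSpan K ⊤ ⊤)}
      add_mem' := fun h1 h2 =>
        (pSpan K (⊤ : Submodule K Fa) (bSpan K ⊤ ⊤)).add_mem h1 h2
      zero_mem' := (pSpan K (⊤ : Submodule K Fa) (bSpan K ⊤ ⊤)).zero_mem
      smul_mem' := fun a x hx => hl a x hx }
  have hI : ∀ x, x ∈ I ↔ x ∈ pSpan K (⊤ : Submodule K Fa) (bSpan K ⊤ ⊤) := fun x => Iff.rfl
  haveI : I.IsTwoSided := ⟨by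
    intro a b ha
    have h1 : a * b = b * a + (a * b - b * a) := by abel
    rw [h1]
    exact I.add_mem (I.mul_mem_left b ha) (hc a b)⟩
  refine ⟨Fa ⧸ I, { (inferInstance : Ring (Fa ⧸ I)) with
      mul_comm := ?_ }, Ideal.Quotient.mk I, ?_⟩
  · intro x y
    obtain ⟨a, rfl⟩ := Ideal.Quotient.mk_surjective x
    obtain ⟨b, rfl⟩ := Ideal.Quotient.mk_surjective y
    exact (Ideal.Quotient.eq).2 (hc a b)
  · intro x
    exact Ideal.Quotient.eq_zero_iff_mem

theorem aux_cong {K : Type*} [Field K] {R : Type*} [AddCommGroup R] [Module K R]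
    {S : Submodule K R} {x y : R} (hy : y ∈ S) (h : x = y) : x ∈ S := h ▸ hy

theorem aux_lie {K : Type*} [Field K] {R : Type*} [Ring R] [Module K R] (S : Submodule K R)
    {x y : R} (hx : x ∈ lieGen K S) (hy : y ∈ lieGen K S) : x * y - y * x ∈ lieGen K S := by
  unfold lieGen at *
  rw [Submodule.mem_sInf] at *
  intro T hT
  exact hT.2 x (hx T hT) y (hy T hT)

theorem aux_sub {K : Type*} [Field K] {R : Type*} [Ring R] [Module K R] (S : Submodule K R)
    {x : R} (hx : x ∈ S) : x ∈ lieGen K S := by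
  unfold lieGen
  rw [Submodule.mem_sInf]
  intro T hT
  exact hT.1 hx

theorem aux_le {K : Type*} [Field K] {R : Type*} [Ring R] [Module K R] (S T : Submodule K R)
    (h : S ≤ T) (h2 : ∀ x ∈ T, ∀ y ∈ T, x * y - y * x ∈ T) : lieGen K S ≤ T :=
  sInf_le ⟨h, h2⟩

theorem aux_form {K : Type*} [Field K] (n : ℕ) (hn : 2 ≤ n)
    (Φ : (Fin n → K) → (Fin n → K) → K)
    (hΦ : (Φ = fun x y => ∑ i : Fin n, x i * y (Fin.rev i)) ∨
          (n % 2 = 0 ∧ Φ = fun x y => ∑ i : Fin n,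
            (if (i : ℕ) < n / 2 then x i * y (Fin.rev i) else -(x i * y (Fin.rev i))))) :
    ∃ (e : Fin n → K) (s : K), s * s = 1 ∧ (∀ i, e i * e i = 1) ∧
      (∀ i, e i * e (Fin.rev i) = s) ∧
      Φ = fun x y => ∑ i : Fin n, e i * (x i * y (Fin.rev i)) := by
  rcases hΦ with h | ⟨h0, h⟩
  · exact ⟨fun _ => 1, 1, by simp, by simp, by simp, by simpa using h⟩
  · refine ⟨fun i => if (i : ℕ) < n / 2 then 1 else -1, -1, by simp, ?_, ?_, ?_⟩
    · intro i; dsimp only; split_ifs <;> simp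
    · intro i
      have := i.2
      have h1 : ((Fin.rev i : Fin n) : ℕ) = n - (i + 1) := Fin.val_rev i
      dsimp only
      split_ifs <;> first | (exfalso; omega) | simp
    · rw [h]
      funext x y
      refine Finset.sum_congr rfl fun i _ => ?_
      by_cases hi : (i : ℕ) < n / 2
      · simp only [if_pos hi, one_mul]
      · simp only [if_neg hi, neg_mul, one_mul]

theorem aux_mem {K : Type*} [Field K] (n : ℕ) (e : Fin n → K) (he : ∀ i, e i * e i = 1)
    (M : Matrix (Fin n) (Fin n) K) :
    (∀ u v : Fin n → K, (∑ i : Fin n, e i * (M.mulVec u i * v (Fin.rev i))) +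
        (∑ i : Fin n, e i * (u i * M.mulVec v (Fin.rev i))) = 0) ↔
      ∀ i j, M i j + e i * e j * M (Fin.rev j) (Fin.rev i) = 0 := by
  constructor
  · intro h i j
    have h1 := h (Pi.single j 1) (Pi.single (Fin.rev i) 1)
    simp only [Matrix.mulVec_single_one, Matrix.col_apply] at h1
    rw [Finset.sum_eq_single i, Finset.sum_eq_single j] at h1
    · simp only [Pi.single_eq_same, mul_one, one_mul] at h1
      linear_combination e i * h1 - M i j * he i
    · intro b _ hb; simp [hb]
    · simp
    · intro b _ hb
      have : Fin.rev b ≠ Fin.rev i := fun hh => hb (Fin.rev_injective hh)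
      simp [this]
    · simp
  · intro h u v
    simp only [Matrix.mulVec, dotProduct, Finset.sum_mul, Finset.mul_sum]
    have h2 : (∑ x : Fin n, ∑ i : Fin n, e x * (u x * (M (Fin.rev x) i * v i)))
        = ∑ x : Fin n, ∑ i : Fin n, e i * (u i * (M (Fin.rev i) (Fin.rev x) * v (Fin.rev x))) := by
      rw [Finset.sum_comm]
      exact (Equiv.sum_comp Fin.revPerm (fun y => ∑ x : Fin n,
        e x * (u x * (M (Fin.rev x) y * v y)))).symm
    rw [h2, ← Finset.sum_add_distrib]
    refine Finset.sum_eq_zero fun i _ => ?_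
    rw [← Finset.sum_add_distrib]
    refine Finset.sum_eq_zero fun j _ => ?_
    have := h i j
    linear_combination e i * u j * v (Fin.rev i) * this -
      e j * M (Fin.rev j) (Fin.rev i) * u j * v (Fin.rev i) * he i

theorem aux_upper {K : Type*} [Field K] {Fa : Type*} [Ring Fa] [Algebra K Fa]
    {n : ℕ} (e : Fin n → K) (he : ∀ i, e i * e i = 1)
    (g : Submodule K (Matrix (Fin n) (Fin n) K))
    (hg : ∀ M, M ∈ g ↔ ∀ i j, M i j + e i * e j * M (Fin.rev j) (Fin.rev i) = 0)
    {C : Type*} [CommRing C] (q : Fa →+* C)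
    (X : Matrix (Fin n) (Fin n) Fa) (hX : X ∈ matCurrent K Fa g) (i j : Fin n) :
    q (X i j) + q (algebraMap K Fa (e i)) * q (algebraMap K Fa (e j)) *
      q (X (Fin.rev j) (Fin.rev i)) = 0 := by
  let T : Submodule K (Matrix (Fin n) (Fin n) Fa) :=
    { carrier := {X | ∀ i j, q (X i j) + q (algebraMap K Fa (e i)) * q (algebraMap K Fa (e j)) *
        q (X (Fin.rev j) (Fin.rev i)) = 0}
      add_mem' := by
        intro a b ha hb i j
        have h1 := ha i j
        have h2 := hb i j
        simp only [Matrix.add_apply, map_add]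
        linear_combination h1 + h2
      zero_mem' := by intro i j; simp
      smul_mem' := by
        intro c x hx i j
        have h1 := hx i j
        simp only [Matrix.smul_apply, Algebra.smul_def, map_mul]
        linear_combination q (algebraMap K Fa c) * h1 }
  have hT : matCurrent K Fa g ≤ T := by
    apply aux_le
    · rw [Submodule.span_le]
      rintro _ ⟨u, M, hM, rfl⟩ i j
      have h1 := (hg M).1 hM i j
      have h2 := congrArg (fun t => q (algebraMap K Fa t)) h1
      simp only [map_add, map_mul, map_zero] at h2
      simp only [Matrix.smul_apply, Matrix.map_apply, smul_eq_mul, map_mul]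
      linear_combination q u * h2
    · intro x hx y hy i j
      have hx : ∀ i j, q (x i j) + q (algebraMap K Fa (e i)) * q (algebraMap K Fa (e j)) *
        q (x (Fin.rev j) (Fin.rev i)) = 0 := hx
      have hy : ∀ i j, q (y i j) + q (algebraMap K Fa (e i)) * q (algebraMap K Fa (e j)) *
        q (y (Fin.rev j) (Fin.rev i)) = 0 := hy
      have hε : ∀ i, q (algebraMap K Fa (e i)) * q (algebraMap K Fa (e i)) = 1 := by
        intro i; rw [← map_mul, ← map_mul, he]; simp
      have key : ∀ x y : Matrix (Fin n) (Fin n) Fa,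
          q ((x * y) (Fin.rev j) (Fin.rev i)) = ∑ k, q (x (Fin.rev j) (Fin.rev k)) *
            q (y (Fin.rev k) (Fin.rev i)) := by
        intro x y
        rw [Matrix.mul_apply, map_sum]
        simp only [map_mul]
        exact (Equiv.sum_comp Fin.revPerm (fun k => q (x (Fin.rev j) k) *
            q (y k (Fin.rev i)))).symm
      simp only [Matrix.sub_apply, map_sub]
      rw [key, key, Matrix.mul_apply, Matrix.mul_apply, map_sum, map_sum]
      simp only [map_mul]
      rw [← Finset.sum_sub_distrib, ← Finset.sum_sub_distrib, Finset.mul_sum,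
        ← Finset.sum_add_distrib]
      refine Finset.sum_eq_zero fun k _ => ?_
      have e1 := eq_neg_of_add_eq_zero_left (hx i k)
      have e2 := eq_neg_of_add_eq_zero_left (hx k j)
      have e3 := eq_neg_of_add_eq_zero_left (hy i k)
      have e4 := eq_neg_of_add_eq_zero_left (hy k j)
      rw [e1, e2, e3, e4]
      linear_combination q (algebraMap K Fa (e i)) * q (algebraMap K Fa (e j)) *
        (q (x (Fin.rev k) (Fin.rev i)) * q (y (Fin.rev j) (Fin.rev k)) -
         q (y (Fin.rev k) (Fin.rev i)) * q (x (Fin.rev j) (Fin.rev k))) * hε k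
  exact hT hX i j

theorem aux_gen {K : Type*} [Field K] {Fa : Type*} [Ring Fa] [Algebra K Fa]
    {n : ℕ} (e : Fin n → K) (s : K) (hs : s * s = 1) (he : ∀ i, e i * e i = 1)
    (hes : ∀ i, e i * e (Fin.rev i) = s)
    (g : Submodule K (Matrix (Fin n) (Fin n) K))
    (hg : ∀ M, M ∈ g ↔ ∀ i j, M i j + e i * e j * M (Fin.rev j) (Fin.rev i) = 0)
    (i j : Fin n) (u : Fa) :
    Matrix.single i j u - (e i * e j) • Matrix.single (Fin.rev j) (Fin.rev i) u ∈
      matCurrent K Fa g := by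
  apply aux_sub
  apply Submodule.subset_span
  refine ⟨u, Matrix.single i j 1 - (e i * e j) • Matrix.single (Fin.rev j) (Fin.rev i) 1, ?_, ?_⟩
  · rw [hg]
    intro a b
    have c1 : (i = Fin.rev b) ↔ (Fin.rev i = b) := by rw [Fin.rev_eq_iff]
    have c2 : (j = Fin.rev a) ↔ (Fin.rev j = a) := by rw [Fin.rev_eq_iff]
    have c3 : (i = a) ↔ (Fin.rev i = Fin.rev a) := by rw [Fin.rev_inj]
    have c4 : (j = b) ↔ (Fin.rev j = Fin.rev b) := by rw [Fin.rev_inj]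
    simp only [Matrix.sub_apply, Matrix.smul_apply, Matrix.single_apply, smul_eq_mul,
      ← c3, ← c4, c1, c2]
    have A : i = a ∧ j = b → e a * e b * (e i * e j) = 1 := by
      rintro ⟨rfl, rfl⟩
      linear_combination e j * e j * he i + he j
    have B : Fin.rev j = a ∧ Fin.rev i = b → e a * e b = e i * e j := by
      rintro ⟨rfl, rfl⟩
      have h1 := hes i
      have h2 := hes j
      linear_combination (-(e (Fin.rev j) * e (Fin.rev i))) * he i
        - (e (Fin.rev j) * e (Fin.rev i)) * e i * e i * he j
        + e i * e j * (e i * e (Fin.rev i)) * h2 + e i * e j * s * h1 + e i * e j * hs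
    by_cases hA : i = a ∧ j = b <;> by_cases hB : Fin.rev j = a ∧ Fin.rev i = b
    · have hB' : Fin.rev i = b ∧ Fin.rev j = a := ⟨hB.2, hB.1⟩
      simp only [hA, hB, and_self, if_true]
      have := A hA
      have := B hB
      simp_all
      grind
    · have hB' : ¬ (Fin.rev i = b ∧ Fin.rev j = a) := fun h => hB ⟨h.2, h.1⟩
      have := A hA
      rw [if_pos hA, if_neg hB, if_neg hB', if_pos hA.symm]
      linear_combination -this
    · have hB' : Fin.rev i = b ∧ Fin.rev j = a := ⟨hB.2, hB.1⟩
      have := B hB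
      rw [if_neg hA, if_pos hB, if_pos hB', if_neg (fun h => hA h.symm)]
      linear_combination this
    · have hB' : ¬ (Fin.rev i = b ∧ Fin.rev j = a) := fun h => hB ⟨h.2, h.1⟩
      rw [if_neg hA, if_neg hB, if_neg hB', if_neg (fun h => hA h.symm)]
      ring
  · ext a b
    simp only [Matrix.sub_apply, Matrix.smul_apply, Matrix.single_apply, smul_eq_mul,
      Matrix.map_apply, map_sub, map_mul, apply_ite (algebraMap K Fa), map_one, map_zero]
    rw [mul_sub, ← map_mul, ← mul_assoc, ← Algebra.commutes (e i * e j) u, Algebra.smul_def]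
    split_ifs <;> simp

theorem aux_diag {K : Type*} [Field K] [CharZero K] {Fa : Type*} [Ring Fa] [Algebra K Fa]
    {n : ℕ} (e : Fin n → K) (he : ∀ i, e i * e i = 1)
    (g : Submodule K (Matrix (Fin n) (Fin n) K))
    (hG : ∀ i j (u : Fa),
      Matrix.single i j u - (e i * e j) • Matrix.single (Fin.rev j) (Fin.rev i) u ∈
      matCurrent K Fa g) (i : Fin n) (hi : i ≠ Fin.rev i) (x : Fa) (hx : x ∈ bSpan K (⊤ : Submodule K Fa) ⊤) :
    Matrix.single i i x ∈ matCurrent K Fa g := by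
  have hH : ∀ u : Fa, Matrix.single i i u - Matrix.single (Fin.rev i) (Fin.rev i) u ∈
      matCurrent K Fa g := by
    intro u
    have := hG i i u
    rwa [he, one_smul] at this
  unfold bSpan at hx
  induction hx using Submodule.span_induction with
  | mem x h =>
    obtain ⟨u, _, v, _, rfl⟩ := h
    have h1 := aux_lie _ (hH u) (hH v)
    have h2 := hH (u * v - v * u)
    have h3 := Submodule.smul_mem _ (2⁻¹ : K) (Submodule.add_mem _ h1 h2)
    refine aux_cong h3 ?_
    simp only [sub_mul, mul_sub, Matrix.single_mul_single_same,
      Matrix.single_mul_single_of_ne _ _ _ _ hi, Matrix.single_mul_single_of_ne _ _ _ _ hi.symm]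
    rw [eq_inv_smul_iff₀ two_ne_zero, two_smul]
    simp only [sub_eq_add_neg, Matrix.single_add, ← Matrix.single_neg]
    abel
  | zero => simp
  | add x y _ _ h1 h2 => rw [Matrix.single_add]; exact Submodule.add_mem _ h1 h2
  | smul c x _ h => rw [← Matrix.smul_single]; exact Submodule.smul_mem _ c h

theorem aux_off {K : Type*} [Field K] [CharZero K] {Fa : Type*} [Ring Fa] [Algebra K Fa]
    {n : ℕ} (e : Fin n → K)
    (g : Submodule K (Matrix (Fin n) (Fin n) K))
    (hG : ∀ i j (u : Fa),
      Matrix.single i j u - (e i * e j) • Matrix.single (Fin.rev j) (Fin.rev i) u ∈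
      matCurrent K Fa g)
    (hD : ∀ i : Fin n, i ≠ Fin.rev i → ∀ x ∈ bSpan K (⊤ : Submodule K Fa) ⊤,
      Matrix.single i i x ∈ matCurrent K Fa g)
    (i j : Fin n) (hij : i ≠ j) (hij' : i ≠ Fin.rev j)
    (x : Fa) (hx : x ∈ pSpan K (⊤ : Submodule K Fa) (bSpan K ⊤ ⊤)) :
    Matrix.single i j x ∈ matCurrent K Fa g := by
  have hji : j ≠ Fin.rev i := fun h => hij' (by rw [h, Fin.rev_rev])
  unfold pSpan at hx
  induction hx using Submodule.span_induction with
  | mem x h =>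
    obtain ⟨w, _, c, hc, rfl⟩ := h
    by_cases hj : j = Fin.rev j
    · have hi : i ≠ Fin.rev i := by
        intro h
        apply hij
        have a1 := congrArg Fin.val h
        have a2 := congrArg Fin.val hj
        rw [Fin.val_rev] at a1 a2
        ext
        omega
      have left : ∀ (y c : Fa), c ∈ bSpan K (⊤ : Submodule K Fa) ⊤ →
          Matrix.single i j (c * y) ∈ matCurrent K Fa g := by
        intro y c hc
        have h1 := aux_lie _ (hD i hi c hc) (hG i j y)
        refine aux_cong h1 ?_
        simp only [sub_mul, mul_sub, Matrix.mul_smul, Matrix.smul_mul,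
          Matrix.single_mul_single_same,
          Matrix.single_mul_single_of_ne _ _ _ _ hi.symm, Matrix.single_mul_single_of_ne _ _ _ _ hij.symm,
          Matrix.single_mul_single_of_ne _ _ _ _ hij']
        simp
      have h1 := left w c hc
      have h2 := left 1 (w * c - c * w) (Submodule.subset_span ⟨w, trivial, c, trivial, rfl⟩)
      have h3 := Submodule.add_mem _ h1 h2
      rw [← Matrix.single_add] at h3
      refine aux_cong h3 (congrArg _ ?_)
      rw [mul_one]; abel
    · have h1 := aux_lie _ (hG i j w) (hD j hj c hc)
      refine aux_cong h1 ?_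
      simp only [sub_mul, mul_sub, Matrix.mul_smul, Matrix.smul_mul,
          Matrix.single_mul_single_same,
          Matrix.single_mul_single_of_ne _ _ _ _ hj, Matrix.single_mul_single_of_ne _ _ _ _ hij.symm,
          Matrix.single_mul_single_of_ne _ _ _ _ hji.symm]
      simp
  | zero => simp
  | add x y _ _ h1 h2 => rw [Matrix.single_add]; exact Submodule.add_mem _ h1 h2
  | smul c x _ h => rw [← Matrix.smul_single]; exact Submodule.smul_mem _ c h

theorem aux_conj {K : Type*} [Field K] [CharZero K] {Fa : Type*} [Ring Fa] [Algebra K Fa]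
    {n : ℕ} (e : Fin n → K) (he : ∀ i, e i * e i = 1)
    (g : Submodule K (Matrix (Fin n) (Fin n) K))
    (hg : ∀ M, M ∈ g ↔ ∀ i j, M i j + e i * e j * M (Fin.rev j) (Fin.rev i) = 0)
    (hG : ∀ i j (u : Fa),
      Matrix.single i j u - (e i * e j) • Matrix.single (Fin.rev j) (Fin.rev i) u ∈
      matCurrent K Fa g)
    {C : Type*} [CommRing C] (q : Fa →+* C)
    (hq : ∀ x, q x = 0 ↔ x ∈ pSpan K (⊤ : Submodule K Fa) (bSpan K ⊤ ⊤))
    (d : Fin n → Faˣ)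
    (hd : ∀ i j, q (d i) * q (d (Fin.rev i)) = q (d j) * q (d (Fin.rev j)))
    (Y : Matrix (Fin n) (Fin n) Fa) (hY : Y ∈ matCurrent K Fa g) :
    Matrix.diagonal (fun i => (d i : Fa)) * Y *
            Matrix.diagonal (fun i => (((d i)⁻¹ : Faˣ) : Fa)) ∈ matCurrent K Fa g := by
  have hD := aux_diag e he g hG
  have hO := aux_off e g hG hD
  have hinv : Matrix.diagonal (fun i => (((d i)⁻¹ : Faˣ) : Fa)) *
      Matrix.diagonal (fun i => (d i : Fa)) = 1 := by
    rw [Matrix.diagonal_mul_diagonal]; simp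
  let φ : Matrix (Fin n) (Fin n) Fa →ₗ[K] Matrix (Fin n) (Fin n) Fa :=
    { toFun := fun Y => Matrix.diagonal (fun i => (d i : Fa)) * Y *
            Matrix.diagonal (fun i => (((d i)⁻¹ : Faˣ) : Fa))
      map_add' := by intro x y; rw [mul_add, add_mul]
      map_smul' := by intro c x; simp }
  have hφ : ∀ Y, φ Y = Matrix.diagonal (fun i => (d i : Fa)) * Y *
            Matrix.diagonal (fun i => (((d i)⁻¹ : Faˣ) : Fa)) := fun Y => rfl
  have hφs : ∀ i j u, φ (Matrix.single i j u) =
      Matrix.single i j (d i * u * ((d j)⁻¹ : Faˣ)) := by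
    intro i j u
    rw [hφ]
    ext a b
    rw [Matrix.mul_diagonal, Matrix.diagonal_mul, Matrix.single_apply, Matrix.single_apply]
    split_ifs with h
    · rw [h.1, h.2]
    · simp
  have hgen : ∀ i j u, φ (Matrix.single i j u -
      (e i * e j) • Matrix.single (Fin.rev j) (Fin.rev i) u) ∈ matCurrent K Fa g := by
    intro i j u
    rw [map_sub, map_smul, hφs, hφs]
    by_cases h1 : i = Fin.rev j
    · subst h1
      simpa using hG (Fin.rev j) j (d (Fin.rev j) * u * ((d j)⁻¹ : Faˣ))
    have hrec : Matrix.single (Fin.rev j) (Fin.rev i)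
        (d i * u * ((d j)⁻¹ : Faˣ) - d (Fin.rev j) * u * ((d (Fin.rev i))⁻¹ : Faˣ) : Fa) ∈
          matCurrent K Fa g := by
      by_cases h2 : i = j
      · subst h2
        apply hD
        · rw [Fin.rev_rev]; exact fun h => h1 h.symm
        · have c : ∀ t : Faˣ, (t : Fa) * u * ((t⁻¹ : Faˣ) : Fa) - u ∈
              bSpan K (⊤ : Submodule K Fa) ⊤ := by
            intro t
            exact Submodule.subset_span ⟨t * u, trivial, ((t⁻¹ : Faˣ) : Fa), trivial, by
              rw [← mul_assoc (((t⁻¹ : Faˣ) : Fa))]; simp⟩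
          have := Submodule.sub_mem _ (c (d i)) (c (d (Fin.rev i)))
          refine aux_cong this ?_
          abel
      · apply hO
        · intro h; exact h2 (Fin.rev_injective h).symm
        · rw [Fin.rev_rev]; exact fun h => h1 h.symm
        · rw [← hq]
          simp only [map_sub, map_mul]
          have h3 := hd i j
          have i1 : q (d j) * q ((d j)⁻¹ : Faˣ) = 1 := by rw [← map_mul]; simp
          have i2 : q (d (Fin.rev i)) * q ((d (Fin.rev i))⁻¹ : Faˣ) = 1 := by rw [← map_mul]; simp
          linear_combination q u * q ((d j)⁻¹ : Faˣ) * q ((d (Fin.rev i))⁻¹ : Faˣ) * h3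
            - q (d i) * q u * q ((d j)⁻¹ : Faˣ) * i2
            + q (d (Fin.rev j)) * q u * q ((d (Fin.rev i))⁻¹ : Faˣ) * i1
    have := Submodule.add_mem _ (hG i j (d i * u * ((d j)⁻¹ : Faˣ)))
      (Submodule.smul_mem _ (e i * e j) hrec)
    refine aux_cong this ?_
    simp only [sub_eq_add_neg, Matrix.single_add, ← Matrix.single_neg, smul_add, smul_neg]
    abel
  have key : matCurrent K Fa g ≤ (matCurrent K Fa g).comap φ := by
    apply aux_le
    · rw [Submodule.span_le]
      rintro _ ⟨u, M, hM, rfl⟩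
      rw [SetLike.mem_coe, Submodule.mem_comap]
      have hM' := (hg M).1 hM
      have dec : u • M.map (algebraMap K Fa) = ∑ i, ∑ j, (2⁻¹ * M i j) • (Matrix.single i j u -
          (e i * e j) • Matrix.single (Fin.rev j) (Fin.rev i) u) := by
        ext a b
        simp only [Matrix.sum_apply, Matrix.smul_apply, Matrix.sub_apply, smul_sub,
          Finset.sum_sub_distrib]
        have s1 : (∑ i, ∑ j, (2⁻¹ * M i j) • Matrix.single i j u a b) = (2⁻¹ * M a b) • u := by
          rw [Finset.sum_eq_single a, Finset.sum_eq_single b]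
          · simp
          · intro c _ hc; simp [Matrix.single_apply, hc]
          · simp
          · intro c _ hc; simp [Matrix.single_apply, hc]
          · simp
        have s2 : (∑ i, ∑ j, (2⁻¹ * M i j) • (e i * e j) •
            Matrix.single (Fin.rev j) (Fin.rev i) u a b) =
            (2⁻¹ * M (Fin.rev b) (Fin.rev a)) • (e (Fin.rev b) * e (Fin.rev a)) • u := by
          rw [Finset.sum_eq_single (Fin.rev b), Finset.sum_eq_single (Fin.rev a)]
          · simp
          · intro c _ hc
            have : Fin.rev c ≠ a := fun h => hc (by rw [← h, Fin.rev_rev])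
            simp [Matrix.single_apply, this]
          · simp
          · intro c _ hc
            have : Fin.rev c ≠ b := fun h => hc (by rw [← h, Fin.rev_rev])
            simp [Matrix.single_apply, this]
          · simp
        rw [s1, s2, smul_smul, ← sub_smul]
        have h1 := hM' (Fin.rev b) (Fin.rev a)
        rw [Fin.rev_rev, Fin.rev_rev] at h1
        have h2 : 2⁻¹ * M a b - 2⁻¹ * M (Fin.rev b) (Fin.rev a) *
            (e (Fin.rev b) * e (Fin.rev a)) = M a b := by
          have := he (Fin.rev b)
          have h5 := he (Fin.rev a)
          have h6 : (2:K)⁻¹ + 2⁻¹ = 1 := by norm_num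
          linear_combination (-(2⁻¹ : K) * (e (Fin.rev b) * e (Fin.rev a))) * h1
            + 2⁻¹ * M a b * (e (Fin.rev a) * e (Fin.rev a)) * this + 2⁻¹ * M a b * h5
            + M a b * h6
        rw [h2, Matrix.map_apply, smul_eq_mul, ← Algebra.commutes, Algebra.smul_def]
      rw [dec, map_sum]
      refine Submodule.sum_mem _ fun i _ => ?_
      rw [map_sum]
      refine Submodule.sum_mem _ fun j _ => ?_
      rw [map_smul]
      exact Submodule.smul_mem _ _ (hgen i j u)
    · intro x hx y hy
      rw [Submodule.mem_comap] at *
      have hm : ∀ x y, φ (x * y) = φ x * φ y := by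
        intro x y
        simp only [hφ]
        calc _ = Matrix.diagonal (fun i => (d i : Fa)) * x * 1 * y *
              Matrix.diagonal (fun i => (((d i)⁻¹ : Faˣ) : Fa)) := by
                rw [mul_one, mul_assoc _ x y]
          _ = _ := by rw [← hinv]; simp only [mul_assoc]
      rw [map_sub, hm, hm]
      exact aux_lie _ hx hy
  exact key hY

/-- for `g = o(Φ) ⊆ A = M_n(k)` with `Φ` the split symmetric form `Φ₀`
or (for even `n`) the symplectic form `Φ₁`, an invertible diagonal matrix
`D = diag(f₁,…,f_n)` normalizes `(g,A)(F)` iff `f_i f_{n−i+1} − f₁ f_n ∈ I₁(F) = F·[F,F]`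
for all `i`. -/
theorem statement18 {K : Type*} [Field K] [CharZero K]
    {Fa : Type*} [Ring Fa] [Algebra K Fa]
    (n : ℕ) (hn : 2 ≤ n)
    (Φ : (Fin n → K) → (Fin n → K) → K)
    (hΦ : (Φ = fun x y => ∑ i : Fin n, x i * y (Fin.rev i)) ∨
          (n % 2 = 0 ∧ Φ = fun x y => ∑ i : Fin n,
            (if (i : ℕ) < n / 2 then x i * y (Fin.rev i) else -(x i * y (Fin.rev i)))))
    (g : Submodule K (Matrix (Fin n) (Fin n) K))
    (hg : ∀ M : Matrix (Fin n) (Fin n) K,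
      M ∈ g ↔ ∀ u v : Fin n → K, Φ (M.mulVec u) v + Φ u (M.mulVec v) = 0)
    (d : Fin n → Faˣ) :
    {X : Matrix (Fin n) (Fin n) Fa | ∃ Y ∈ matCurrent K Fa g,
        X = Matrix.diagonal (fun i => (d i : Fa)) * Y *
            Matrix.diagonal (fun i => (((d i)⁻¹ : Faˣ) : Fa))} =
      (matCurrent K Fa g : Set (Matrix (Fin n) (Fin n) Fa)) ↔
    ∀ i : Fin n, (d i : Fa) * (d (Fin.rev i) : Fa) -
        (d (⟨0, by omega⟩ : Fin n) : Fa) * (d (Fin.rev ⟨0, by omega⟩) : Fa) ∈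
      pSpan K (⊤ : Submodule K Fa) (bSpan K ⊤ ⊤) := by
  obtain ⟨e, s, hs, he, hes, hΦe⟩ := aux_form n hn Φ hΦ
  have hg' : ∀ M, M ∈ g ↔ ∀ i j, M i j + e i * e j * M (Fin.rev j) (Fin.rev i) = 0 := by
    intro M
    rw [hg, ← aux_mem n e he M, hΦe]
  obtain ⟨C, _, q, hq⟩ := aux_quot (K := K) (Fa := Fa)
  have hG := aux_gen (Fa := Fa) e s hs he hes g hg'
  have inv : ∀ t : Faˣ, q t * q ((t⁻¹ : Faˣ) : Fa) = 1 := by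
    intro t; rw [← map_mul]; simp
  constructor
  · intro h i
    rw [← hq]
    simp only [map_sub, map_mul]
    set o : Fin n := ⟨0, by omega⟩ with ho
    by_cases h0 : i = o
    · rw [h0]; ring
    by_cases h1 : i = Fin.rev o
    · rw [h1, Fin.rev_rev]; ring
    have hX := h.subset ⟨_, hG i o 1, rfl⟩
    have h2 := aux_upper e he g hg' q _ hX i o
    rw [Matrix.mul_diagonal, Matrix.diagonal_mul, Matrix.mul_diagonal, Matrix.diagonal_mul] at h2
    have h3 : ¬ (Fin.rev o = i ∧ Fin.rev i = o) := fun hh => h1 hh.1.symm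
    have h4 : ¬ (i = Fin.rev o ∧ o = Fin.rev i) := fun hh => h1 hh.1
    simp only [Matrix.sub_apply, Matrix.smul_apply, Matrix.single_apply, and_self, if_true,
      if_neg h3, if_neg h4, smul_zero, sub_zero, zero_sub, mul_one, mul_neg, neg_mul, map_neg,
      map_mul] at h2
    simp only [Algebra.smul_def, map_mul, mul_one] at h2
    have hε : ∀ i, q (algebraMap K Fa (e i)) * q (algebraMap K Fa (e i)) = 1 := by
      intro i; rw [← map_mul, ← map_mul, he]; simp
    have e1 := hε i
    have e2 := hε o
    have i1 := inv (d o)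
    have i2 := inv (d (Fin.rev i))
    generalize q (algebraMap K Fa (e i)) = ei at *
    generalize q (algebraMap K Fa (e o)) = eo at *
    generalize q ((d o)⁻¹ : Faˣ) = do' at *
    generalize q ((d (Fin.rev i))⁻¹ : Faˣ) = di' at *
    generalize q (d o) = do1 at *
    generalize q (d i) = di at *
    generalize q (d (Fin.rev o)) = dro at *
    generalize q (d (Fin.rev i)) = dri at *
    have h5 : di * do' - dro * di' = 0 := by
      linear_combination h2 + dro * di' * eo * eo * e1 + dro * di' * e2
    linear_combination do1 * dri * h5 - di * dri * i1 + dro * do1 * i2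
  · intro h
    have hd : ∀ i j, q (d i) * q (d (Fin.rev i)) = q (d j) * q (d (Fin.rev j)) := by
      intro i j
      have h1 := (hq _).2 (h i)
      have h2 := (hq _).2 (h j)
      simp only [map_sub, map_mul] at h1 h2
      linear_combination h1 - h2
    have hd' : ∀ i j, q ((d i)⁻¹ : Faˣ) * q ((d (Fin.rev i))⁻¹ : Faˣ) =
        q ((d j)⁻¹ : Faˣ) * q ((d (Fin.rev j))⁻¹ : Faˣ) := by
      intro i j
      have h1 := hd i j
      have a1 := inv (d i)
      have a2 := inv (d (Fin.rev i))
      have a3 := inv (d j)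
      have a4 := inv (d (Fin.rev j))
      generalize q ((d i)⁻¹ : Faˣ) = x1 at *
      generalize q ((d (Fin.rev i))⁻¹ : Faˣ) = x2 at *
      generalize q ((d j)⁻¹ : Faˣ) = x3 at *
      generalize q ((d (Fin.rev j))⁻¹ : Faˣ) = x4 at *
      generalize q (d i) = y1 at *
      generalize q (d (Fin.rev i)) = y2 at *
      generalize q (d j) = y3 at *
      generalize q (d (Fin.rev j)) = y4 at *
      have b1 : (y1 * y2) * (x1 * x2) = 1 := by linear_combination y2 * x2 * a1 + a2
      have b2 : (y3 * y4) * (x3 * x4) = 1 := by linear_combination y4 * x4 * a3 + a4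
      linear_combination (-(x1 * x2)) * b2 + (x3 * x4) * b1 - (x1 * x2 * x3 * x4) * h1
    ext X
    constructor
    · rintro ⟨Y, hY, rfl⟩
      exact aux_conj e he g hg' hG q hq d hd Y hY
    · intro hX
      refine ⟨_, aux_conj e he g hg' hG q hq (fun i => (d i)⁻¹) hd' X hX, ?_⟩
      ext a b
      simp only [Matrix.mul_diagonal, Matrix.diagonal_mul, inv_inv, mul_assoc]
      simp
end
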